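/- arXiv:1812.07722 — 3 statements merged into one kernel-verified Lean document; each statement's English description precedes it below -/
import Mathlib

section
/- Let π be a probability vector on {1,…,2^S} with 0 < πᵢ < 1 for all i, let D be the node (at level l_D) selected by the hiePM rule from π, and let the observation channel be P_{z|i} = Bern(1−p[l_D]) if i ∈ D and P_{z|i} = Bern(p[l_D]) if i ∉ D, where 1/2 > p[1] > p[2] > ⋯ > p[S] > 0. Then for every level l < S, the level-l nested Extrinsic Jensen–Shannon divergence satisfies EJS^{(l)}(π) ≥ K₀ := min{ I(1/3; p[1]), (2/3)·D((1/3)Bern(1−p[1]) + (2/3)Bern(p[1]) ‖ Bern(p[1])) }. -/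
/-! All output laws are Bernoulli, so everything reduces to the binary divergence `kl`, whose
joint convexity (`kl_mix`) gives nearly all estimates, including the data-processing inequality
for binary symmetric channels (`kl_bsc`), hence monotonicity of mutual information and
divergence in the crossover probability.

The hiePM rule selects a node `D` of mass `m ≥ 1/3`, and `m ≤ 2/3` unless `D` is a leaf
(`select_spec`); write `p` for the crossover probability at its level, so `p ≤ p 1`.

* If `D` is at level at most `l`, every bin is inside `D` or disjoint from it. Replacing the law
  given the complement of a bin by the overall output law decreases each divergence
  (`kl_mix_right`), and what is left sums to `I(m; p)`. Here `D` is not a leaf, so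
  `1/3 ≤ m ≤ 2/3` and `I(m; p) ≥ I(1/3; p) ≥ I(1/3; p 1)`.
  The first of these two inequalities is unimodality of the binary entropy.
* If `D` is strictly below level `l`, it lies in one bin, of mass `M ≥ m`. The term of that bin is
  `M · D(Bern(p + (1 - 2p) m / M) ‖ Bern(p))`; by convexity this is at least its value at
  `M = 1`, `m = 1/3` (`kl_third_le`), and then `p` may be replaced by `p 1`. The other terms are
  nonnegative. -/

open Finset
open scoped ENNReal NNReal

noncomputable section

/-- Bernoulli pmf on `Bool` with probability `p` of `true`. -/
def bern (p : ℝ) : Bool → ℝ := fun b => if b then p else 1 - p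

/-- KL divergence between two pmfs on `Bool`. -/
def KLb (P Q : Bool → ℝ) : ℝ := ∑ b : Bool, P b * Real.log (P b / Q b)

/-- `C1 p = D(Bern(p) ‖ Bern(1-p))`. -/
def C1 (p : ℝ) : ℝ := KLb (bern p) (bern (1 - p))

/-- Binary entropy. -/
def Hb (x : ℝ) : ℝ := -x * Real.log x - (1 - x) * Real.log (1 - x)

/-- Mutual information of input `Bern(q)` through a BSC with crossover probability `p`. -/
def MI (q p : ℝ) : ℝ := Hb (q * (1 - p) + (1 - q) * p) - Hb p

/-- The constant `K₀`. -/
def K0 (p1 : ℝ) : ℝ :=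
  min (MI (1/3) p1)
    (2/3 * KLb (fun b => 1/3 * bern (1 - p1) b + 2/3 * bern p1 b) (bern p1))

/-- The set of leaves of the node at level `l`, index `k` (0-indexed), in the
complete binary tree of depth `S` whose leaves are `Fin (2^S)`. -/
def node (S l k : ℕ) : Finset (Fin (2^S)) :=
  Finset.univ.filter fun i => k * 2^(S - l) ≤ (i : ℕ) ∧ (i : ℕ) < (k+1) * 2^(S - l)

/-- Posterior mass of node `(l,k)`. -/
def mass (S : ℕ) (π : Fin (2^S) → ℝ) (l k : ℕ) : ℝ := ∑ i ∈ node S l k, π i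

/-- hiePM descent: starting at a node `(l,k)` of mass `> 1/2`, descend towards the
child with larger mass while the mass stays `> 1/2`; upon reaching the first node of
mass `≤ 1/2`, select between that node and its parent whichever has mass closer to `1/2`;
a leaf of mass `> 1/2` is selected. -/
def descend (S : ℕ) (π : Fin (2^S) → ℝ) : ℕ → ℕ → ℕ → ℕ × ℕ
  | 0, l, k => (l, k)
  | fuel + 1, l, k =>
    if l = S then (l, k)
    else
      let k' := if mass S π (l+1) (2*k+1) ≤ mass S π (l+1) (2*k) then 2*k else 2*k+1
      if 1/2 < mass S π (l+1) k' then descend S π fuel (l+1) k'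
      else if |mass S π (l+1) k' - 1/2| ≤ |mass S π l k - 1/2| then (l+1, k')
      else (l, k)

/-- The node `(l, k)` selected by the hiePM rule from the posterior `π`. -/
def select (S : ℕ) (π : Fin (2^S) → ℝ) : ℕ × ℕ := descend S π S 0 0

/-- Likelihood of the 1-bit observation `z` given `φ = i` when node `(l,k)` is probed,
with crossover probability `p l` at level `l`. -/
def like (S : ℕ) (p : ℕ → ℝ) (l k : ℕ) (i : Fin (2^S)) (z : Bool) : ℝ :=
  bern (if i ∈ node S l k then 1 - p l else p l) z

/-- Level-`l` nested Extrinsic Jensen–Shannon divergence of the posterior `π` under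
the hiePM 1-bit measurement model: `EJS^{(l)}(π) = Σ_q π^{(l)}_q D(P_{Z|bin(q)} ‖ P_{Z|∉bin(q)})`,
where `bin(q)` is the `q`-th node at level `l`, `π^{(l)}_q` its mass,
`P_{Z|bin(q)} = Σ_{i∈bin(q)} (πᵢ/π^{(l)}_q) P_{Z|i}` and
`P_{Z|∉bin(q)} = Σ_{i∉bin(q)} (πᵢ/(1−π^{(l)}_q)) P_{Z|i}`, and where the observation
channel is `P_{Z|i} = Bern(1−p[l_D])` for `i ∈ D`, `Bern(p[l_D])` for `i ∉ D`,
with `D = select S π` the hiePM-selected node. -/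
def nestedEJS (S : ℕ) (p : ℕ → ℝ) (l : ℕ) (π : Fin (2^S) → ℝ) : ℝ :=
  ∑ q ∈ Finset.range (2^l),
    mass S π l q *
      KLb
        (fun z =>
          (∑ i ∈ node S l q, π i * like S p (select S π).1 (select S π).2 i z) /
            mass S π l q)
        (fun z =>
          (∑ i ∈ (node S l q)ᶜ, π i * like S p (select S π).1 (select S π).2 i z) /
            (1 - mass S π l q))

/-! ### Binary divergence -/

/-- The binary divergence `D(Bern(x) ‖ Bern(y))`, as a function of two reals; it has its
intended meaning for `x, y ∈ (0, 1)`. -/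
def kl (x y : ℝ) : ℝ := x * Real.log (x / y) + (1 - x) * Real.log ((1 - x) / (1 - y))

lemma KLb_bern (x y : ℝ) : KLb (bern x) (bern y) = kl x y := by
  simp [KLb, bern, kl]

lemma kl_self {x : ℝ} (h0 : 0 < x) (h1 : x < 1) : kl x x = 0 := by
  have : 1 - x ≠ 0 := by linarith
  simp [kl, div_self h0.ne', div_self this]

lemma kl_compl (x y : ℝ) : kl (1 - x) (1 - y) = kl x y := by
  simp only [kl, sub_sub_cancel]; ring

/-- The bound `log u ≤ u - 1` at `u = t * b / a`, multiplied by `a`; `t` is a free parameter. -/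
lemma mul_log_ge {a b t : ℝ} (ha : 0 < a) (hb : 0 < b) (ht : 0 < t) :
    a * Real.log t + a - b * t ≤ a * Real.log (a / b) := by
  have h := Real.log_le_sub_one_of_pos (show 0 < t * b / a by positivity)
  rw [Real.log_div (by positivity) ha.ne', Real.log_mul ht.ne' hb.ne'] at h
  rw [Real.log_div ha.ne' hb.ne']
  have h2 := mul_le_mul_of_nonneg_left h ha.le
  have h3 : a * (t * b / a - 1) = b * t - a := by field_simp
  rw [h3] at h2
  linarith

lemma kl_nonneg {x y : ℝ} (hx0 : 0 < x) (hx1 : x < 1) (hy0 : 0 < y) (hy1 : y < 1) :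
    0 ≤ kl x y := by
  have h1 := mul_log_ge hx0 hy0 one_pos
  have h2 := mul_log_ge (sub_pos.2 hx1) (sub_pos.2 hy1) one_pos
  simp only [Real.log_one] at h1 h2
  unfold kl; linarith

/-- Two-term log-sum inequality for convex weights. -/
lemma log_sum {a b a' b' s : ℝ} (ha : 0 < a) (hb : 0 < b) (ha' : 0 < a') (hb' : 0 < b')
    (hs0 : 0 ≤ s) (hs1 : s ≤ 1) :
    (s * a + (1 - s) * a') * Real.log ((s * a + (1 - s) * a') / (s * b + (1 - s) * b')) ≤
      s * (a * Real.log (a / b)) + (1 - s) * (a' * Real.log (a' / b')) := by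
  have pos : ∀ {u v : ℝ}, 0 < u → 0 < v → 0 < s * u + (1 - s) * v := by
    intro u v hu hv
    rcases hs0.eq_or_lt with h | h
    · subst h; simpa using hv
    · have := mul_pos h hu
      have := mul_nonneg (sub_nonneg.2 hs1) hv.le
      linarith
  have hA := pos ha ha'
  have hB := pos hb hb'
  set A := s * a + (1 - s) * a' with hAd
  set B := s * b + (1 - s) * b' with hBd
  have ht : 0 < A / B := div_pos hA hB
  have h1 := mul_le_mul_of_nonneg_left (mul_log_ge ha hb ht) hs0
  have h2 := mul_le_mul_of_nonneg_left (mul_log_ge ha' hb' ht) (sub_nonneg.2 hs1)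
  -- the linear parts of the two tangent bounds cancel because `B * (A / B) = A`
  have h3 : B * (A / B) = A := by field_simp
  have h4 : s * (a * Real.log (A / B) + a - b * (A / B)) +
      (1 - s) * (a' * Real.log (A / B) + a' - b' * (A / B)) =
      A * Real.log (A / B) + A - B * (A / B) := by
    rw [hAd, hBd]; ring
  linarith

/-- Joint convexity of the binary divergence. -/
lemma kl_mix {x y x' y' s : ℝ} (hx0 : 0 < x) (hx1 : x < 1) (hy0 : 0 < y) (hy1 : y < 1)
    (hx0' : 0 < x') (hx1' : x' < 1) (hy0' : 0 < y') (hy1' : y' < 1)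
    (hs0 : 0 ≤ s) (hs1 : s ≤ 1) :
    kl (s * x + (1 - s) * x') (s * y + (1 - s) * y') ≤ s * kl x y + (1 - s) * kl x' y' := by
  have h1 := log_sum hx0 hy0 hx0' hy0' hs0 hs1
  have h2 := log_sum (sub_pos.2 hx1) (sub_pos.2 hy1) (sub_pos.2 hx1') (sub_pos.2 hy1') hs0 hs1
  have e : ∀ u v : ℝ, s * (1 - u) + (1 - s) * (1 - v) = 1 - (s * u + (1 - s) * v) := by
    intro u v; ring
  rw [e, e] at h2
  unfold kl; linarith

/-- The divergence decreases when the second argument is moved towards the first. -/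
lemma kl_mix_right {x z s : ℝ} (hx0 : 0 < x) (hx1 : x < 1) (hz0 : 0 < z) (hz1 : z < 1)
    (hs0 : 0 ≤ s) (hs1 : s ≤ 1) : kl x (s * x + (1 - s) * z) ≤ kl x z := by
  have h := kl_mix hx0 hx1 hx0 hx1 hx0 hx1 hz0 hz1 hs0 hs1
  rw [kl_self hx0 hx1, show s * x + (1 - s) * x = x by ring] at h
  nlinarith [kl_nonneg hx0 hx1 hz0 hz1]

lemma kl_mix_left {x y s : ℝ} (hx0 : 0 < x) (hx1 : x < 1) (hy0 : 0 < y) (hy1 : y < 1)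
    (hs0 : 0 ≤ s) (hs1 : s ≤ 1) : kl (s * x + (1 - s) * y) y ≤ s * kl x y := by
  have h := kl_mix hx0 hx1 hy0 hy1 hy0 hy1 hy0 hy1 hs0 hs1
  rw [kl_self hy0 hy1, show s * y + (1 - s) * y = y by ring] at h
  linarith

/-- Data processing: passing both Bernoulli laws through a binary symmetric channel with
crossover probability `e` decreases the divergence. -/
lemma kl_bsc {x y e : ℝ} (hx0 : 0 < x) (hx1 : x < 1) (hy0 : 0 < y) (hy1 : y < 1)
    (he0 : 0 ≤ e) (he1 : e ≤ 1) :
    kl (e * (1 - x) + (1 - e) * x) (e * (1 - y) + (1 - e) * y) ≤ kl x y := by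
  have h := kl_mix (sub_pos.2 hx1) (by linarith : 1 - x < 1) (sub_pos.2 hy1)
    (by linarith : 1 - y < 1) hx0 hx1 hy0 hy1 he0 he1
  rw [kl_compl] at h
  linarith

/-! ### The binary symmetric channel -/

/-- Output probability of `true` for a binary symmetric channel with crossover probability `p`
and input `Bern(t)`. -/
def out (p t : ℝ) : ℝ := p + (1 - 2 * p) * t

lemma out_bounds {p t : ℝ} (hp0 : 0 < p) (hp : p < 1/2) (ht0 : 0 ≤ t) (ht1 : t ≤ 1) :
    0 < out p t ∧ out p t < 1 := by
  unfold out
  constructor <;> nlinarith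

lemma MI_eq {m p : ℝ} (hp0 : 0 < p) (hp : p < 1/2) (hm0 : 0 ≤ m) (hm1 : m ≤ 1) :
    MI m p = m * kl (1 - p) (out p m) + (1 - m) * kl p (out p m) := by
  obtain ⟨h0, h1⟩ := out_bounds hp0 hp hm0 hm1
  have e : m * (1 - p) + (1 - m) * p = out p m := by unfold out; ring
  have hq : 1 - p ≠ 0 := by linarith
  have hy : 1 - out p m ≠ 0 := by linarith
  rw [MI, e]
  simp only [kl, Hb, sub_sub_cancel]
  rw [Real.log_div hq h0.ne', Real.log_div hp0.ne' hy, Real.log_div hp0.ne' h0.ne',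
    Real.log_div hq hy]
  have e2 : out p m = m * (1 - p) + (1 - m) * p := e.symm
  generalize Real.log (out p m) = L1
  generalize Real.log (1 - out p m) = L2
  rw [e2]; ring

lemma Hb_eq_binEntropy (x : ℝ) : Hb x = Real.binEntropy x := by
  simp only [Hb, Real.binEntropy, Real.log_inv]; ring

lemma MI_third_le {m p : ℝ} (hp0 : 0 < p) (hp : p < 1/2) (h1 : 1/3 ≤ m) (h2 : m ≤ 2/3) :
    MI (1/3) p ≤ MI m p := by
  unfold MI
  rw [Hb_eq_binEntropy (_ + _), Hb_eq_binEntropy (m * _ + _)]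
  have key : ∀ a b : ℝ, 0 ≤ a → a ≤ b → b ≤ 1/2 → Real.binEntropy a ≤ Real.binEntropy b := by
    intro a b h0 hab hb
    apply Real.binEntropy_strictMonoOn.monotoneOn _ _ hab <;> constructor <;> norm_num at * <;>
      linarith
  rcases le_total m (1/2) with h | h
  · have := key (1/3 * (1 - p) + (1 - 1/3) * p) (m * (1 - p) + (1 - m) * p)
      (by nlinarith) (by nlinarith) (by nlinarith)
    linarith
  · have := key (1/3 * (1 - p) + (1 - 1/3) * p) (1 - (m * (1 - p) + (1 - m) * p))
      (by nlinarith) (by nlinarith) (by nlinarith)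
    rw [Real.binEntropy_one_sub] at this
    linarith

/-- A noisier channel is a degraded version of a less noisy one: `BSC(p₁)` is `BSC(p)`
followed by a `BSC(e)`. -/
lemma exists_degrade {p p1 : ℝ} (hp : p ≤ p1) (hp1 : p1 < 1/2) :
    ∃ e, 0 ≤ e ∧ e ≤ 1 ∧ ∀ t, out p1 t = e * (1 - out p t) + (1 - e) * out p t := by
  have h : 0 < 1 - 2 * p := by linarith
  have he : (p1 - p) / (1 - 2 * p) * (1 - 2 * p) = p1 - p := div_mul_cancel₀ _ h.ne'
  refine ⟨(p1 - p) / (1 - 2 * p), div_nonneg (by linarith) h.le,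
    (div_le_one h).2 (by linarith), fun t => ?_⟩
  generalize (p1 - p) / (1 - 2 * p) = e at he
  unfold out
  linear_combination -(1 - 2 * t) * he

lemma kl_out_anti {p p1 s t : ℝ} (hp0 : 0 < p) (hp : p ≤ p1) (hp1 : p1 < 1/2)
    (hs0 : 0 ≤ s) (hs1 : s ≤ 1) (ht0 : 0 ≤ t) (ht1 : t ≤ 1) :
    kl (out p1 s) (out p1 t) ≤ kl (out p s) (out p t) := by
  obtain ⟨e, he0, he1, he⟩ := exists_degrade hp hp1
  have a := out_bounds hp0 (hp.trans_lt hp1) hs0 hs1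
  have b := out_bounds hp0 (hp.trans_lt hp1) ht0 ht1
  rw [he s, he t]
  exact kl_bsc a.1 a.2 b.1 b.2 he0 he1

lemma out_zero (p : ℝ) : out p 0 = p := by simp [out]
lemma out_one (p : ℝ) : out p 1 = 1 - p := by simp only [out]; ring

lemma MI_anti {p p1 m : ℝ} (hp0 : 0 < p) (hp : p ≤ p1) (hp1 : p1 < 1/2)
    (hm0 : 0 ≤ m) (hm1 : m ≤ 1) : MI m p1 ≤ MI m p := by
  rw [MI_eq (hp0.trans_le hp) hp1 hm0 hm1, MI_eq hp0 (hp.trans_lt hp1) hm0 hm1]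
  have h1 := kl_out_anti hp0 hp hp1 zero_le_one le_rfl hm0 hm1
  have h0 := kl_out_anti hp0 hp hp1 le_rfl zero_le_one hm0 hm1
  rw [out_one, out_one] at h1
  rw [out_zero, out_zero] at h0
  have := sub_nonneg.2 hm1
  gcongr

/-- Monotonicity in the input: `M·D(BSC_p(m / M) ‖ BSC_p(0))` is at least the value at
`M = 1`, `m = 1/3`, because the divergence is convex in its first argument and vanishes at
zero input. -/
lemma kl_third_le {p m M : ℝ} (hp0 : 0 < p) (hp : p < 1/2) (hm : 1/3 ≤ m) (hmM : m ≤ M)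
    (hM : M ≤ 1) : kl (out p (1/3)) p ≤ M * kl (out p (m / M)) p := by
  have hm0 : 0 < m := by linarith
  have hM0 : 0 < M := by linarith
  have b := out_bounds hp0 hp (div_nonneg hm0.le hM0.le) ((div_le_one hM0).2 hmM)
  -- `1/3 = s * (m / M)` with weight `s = M / (3 m) ≤ M`
  have hs1 : M / (3 * m) ≤ M := div_le_self hM0.le (by linarith)
  have h := kl_mix_left b.1 b.2 hp0 (by linarith : p < 1)
    (by positivity : 0 ≤ M / (3 * m)) (hs1.trans hM)
  have e : M / (3 * m) * out p (m / M) + (1 - M / (3 * m)) * p = out p (1/3) := by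
    unfold out; field_simp; ring
  rw [e] at h
  exact h.trans (mul_le_mul_of_nonneg_right hs1 (kl_nonneg b.1 b.2 hp0 (by linarith)))

lemma K0_le_kl {p p1 : ℝ} (hp0 : 0 < p) (hp : p ≤ p1) (hp1 : p1 < 1/2) :
    K0 p1 ≤ kl (out p (1/3)) p := by
  refine (min_le_right _ _).trans ?_
  have e : (fun b => 1/3 * bern (1 - p1) b + 2/3 * bern p1 b) = bern (out p1 (1/3)) := by
    funext b; cases b <;> simp [bern, out] <;> ring
  have h := kl_out_anti (s := 1/3) (t := 0) hp0 hp hp1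
    (by norm_num) (by norm_num) (by norm_num) (by norm_num)
  have b := out_bounds (hp0.trans_le hp) hp1 (t := 1/3) (by norm_num) (by norm_num)
  have := kl_nonneg b.1 b.2 (hp0.trans_le hp) (by linarith)
  rw [e, KLb_bern]
  rw [out_zero, out_zero] at h
  linarith

/-! ### The binary tree -/

/-- The leaves below `(l, k)` are those whose index has `k` as its leading `l` bits. -/
lemma mem_node {S l k : ℕ} {i : Fin (2^S)} : i ∈ node S l k ↔ (i : ℕ) / 2^(S - l) = k := by
  rw [node, mem_filter, Nat.div_eq_iff (by positivity)]
  have : 0 < 2^(S-l) := by positivity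
  simp only [mem_univ, true_and, Nat.add_mul, one_mul]
  omega

/-- Two nodes are nested or disjoint: the level-`a` ancestor of `(b, k)` is
`(a, k / 2^(b-a))`. -/
lemma mem_node_of_mem {S a b k k' : ℕ} (hab : a ≤ b) (hb : b ≤ S) {i : Fin (2^S)}
    (hi : i ∈ node S b k) : i ∈ node S a k' ↔ k / 2^(b - a) = k' := by
  rw [mem_node] at *
  rw [← hi, Nat.div_div_eq_div_mul, ← pow_add, show S - b + (b - a) = S - a by omega]

lemma idx_lt {S l : ℕ} (hl : l ≤ S) (i : Fin (2^S)) : (i : ℕ) / 2^(S - l) < 2^l := by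
  rw [Nat.div_lt_iff_lt_mul (by positivity), ← pow_add, show l + (S - l) = S by omega]
  exact i.2

lemma node_nonempty {S l k : ℕ} (hl : l ≤ S) (hk : k < 2^l) : (node S l k).Nonempty := by
  have : k * 2^(S-l) < 2^S := by
    calc k * 2^(S-l) < 2^l * 2^(S-l) := Nat.mul_lt_mul_of_pos_right hk (by positivity)
      _ = 2^S := by rw [← pow_add, show l + (S - l) = S by omega]
  refine ⟨⟨k * 2^(S-l), this⟩, ?_⟩
  rw [mem_node]
  exact Nat.mul_div_cancel _ (by positivity)

lemma sum_nodes {S l : ℕ} (hl : l ≤ S) (f : Fin (2^S) → ℝ) :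
    ∑ q ∈ range (2^l), ∑ i ∈ node S l q, f i = ∑ i, f i := by
  rw [← Finset.sum_fiberwise_of_maps_to (s := univ) (t := range (2^l))
    (g := fun i : Fin (2^S) => (i : ℕ) / 2^(S-l)) (fun i _ => mem_range.2 (idx_lt hl i))]
  refine sum_congr rfl fun q _ => sum_congr ?_ fun _ _ => rfl
  ext i; simp [mem_node]

lemma mass_split {S l k : ℕ} (hl : l < S) (π : Fin (2^S) → ℝ) :
    mass S π l k = mass S π (l+1) (2*k) + mass S π (l+1) (2*k+1) := by
  unfold mass
  rw [← sum_union]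
  · refine sum_congr ?_ fun _ _ => rfl
    ext i
    rw [mem_union, mem_node_of_mem (b := l+1) (k := (i : ℕ) / 2^(S-(l+1))) (by omega) hl
      (mem_node.2 rfl), mem_node, mem_node, show l + 1 - l = 1 by omega]
    omega
  · rw [disjoint_left]
    intro i h1 h2
    rw [mem_node] at h1 h2
    omega

lemma mass_root {S : ℕ} {π : Fin (2^S) → ℝ} : mass S π 0 0 = ∑ i, π i := by
  refine sum_congr ?_ fun _ _ => rfl
  ext i
  simp [mem_node, Nat.div_eq_of_lt i.2]

lemma mass_pos {S l k : ℕ} {π : Fin (2^S) → ℝ} (hpos : ∀ i, 0 < π i) (hl : l ≤ S)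
    (hk : k < 2^l) : 0 < mass S π l k :=
  sum_pos (fun i _ => hpos i) (node_nonempty hl hk)

lemma sum_compl_node {S l k : ℕ} (f : Fin (2^S) → ℝ) :
    ∑ i ∈ (node S l k)ᶜ, f i = ∑ i, f i - ∑ i ∈ node S l k, f i := by
  rw [← sum_add_sum_compl (node S l k) f]; ring

lemma mass_lt_one {S l k : ℕ} {π : Fin (2^S) → ℝ} (hpos : ∀ i, 0 < π i)
    (hsum : ∑ i, π i = 1) (hl1 : 1 ≤ l) (hl : l ≤ S) : mass S π l k < 1 := by
  have h2 : 2 ≤ 2^l := by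
    calc 2 = 2^1 := rfl
      _ ≤ 2^l := Nat.pow_le_pow_right (by norm_num) hl1
  -- a leaf below some other node `k'` of the same level lies outside `(l, k)`
  obtain ⟨k', hk', hne⟩ : ∃ k' < 2^l, k' ≠ k := by
    rcases eq_or_ne k 0 with h | h
    · exact ⟨1, by omega, by omega⟩
    · exact ⟨0, by omega, by omega⟩
  obtain ⟨i, hi⟩ := node_nonempty hl hk'
  have hic : i ∈ (node S l k)ᶜ := by
    rw [mem_compl, mem_node]; rw [mem_node] at hi; omega
  have := sum_pos (fun i _ => hpos i) ⟨i, hic⟩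
  rw [sum_compl_node π, hsum] at this
  unfold mass; linarith

/-! ### The selected node -/

lemma descend_spec {S : ℕ} {π : Fin (2^S) → ℝ} (hpos : ∀ i, 0 < π i) (fuel : ℕ) :
    ∀ l k, l + fuel = S → 1/2 < mass S π l k → k < 2^l →
      ∀ r, descend S π fuel l k = r →
        r.1 ≤ S ∧ r.2 < 2^r.1 ∧ 1/3 ≤ mass S π r.1 r.2 ∧
          (mass S π r.1 r.2 ≤ 2/3 ∨ r.1 = S) := by
  induction fuel with
  | zero =>
    intro l k hl hm hk r hr
    simp only [descend] at hr
    subst hr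
    exact ⟨by simp only; omega, hk, by simp only; linarith, Or.inr (by simpa using hl)⟩
  | succ fuel ih =>
    intro l k hl hm hk r hr
    have hlS : l < S := by omega
    simp only [descend, if_neg hlS.ne] at hr
    have hsplit := mass_split (k := k) hlS π
    have hpow : 2^(l+1) = 2 * 2^l := by ring
    have h0 : 0 < mass S π (l+1) (2*k) := mass_pos hpos hlS (by omega)
    have h1 : 0 < mass S π (l+1) (2*k+1) := mass_pos hpos hlS (by omega)
    set k' := if mass S π (l+1) (2*k+1) ≤ mass S π (l+1) (2*k) then 2*k else 2*k+1 with hk'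
    have hk'lt : k' < 2^(l+1) := by rw [hk']; split_ifs <;> omega
    -- the larger child carries at least half of the mass of its parent
    have hc : mass S π l k ≤ 2 * mass S π (l+1) k' := by
      rw [hk']; split_ifs with h <;> linarith
    clear_value k'
    split_ifs at hr with ha hb
    · exact ih (l+1) k' (by omega) ha hk'lt r hr
    · subst hr
      refine ⟨hlS, hk'lt, ?_, Or.inl ?_⟩
      · rw [abs_of_nonpos (by linarith), abs_of_nonneg (by linarith)] at hb
        simp only; linarith
      · simp only; linarith
    · subst hr
      rw [abs_of_nonpos (by linarith), abs_of_nonneg (by linarith)] at hb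
      refine ⟨hlS.le, hk, ?_, Or.inl ?_⟩ <;> simp only <;> linarith

/-- The selected node is not the root, has mass at least `1/3`, and unless it is a leaf its mass
is at most `2/3`. -/
lemma select_spec {S : ℕ} (hS : 1 ≤ S) {π : Fin (2^S) → ℝ} (hpos : ∀ i, 0 < π i)
    (hsum : ∑ i, π i = 1) :
    1 ≤ (select S π).1 ∧ (select S π).1 ≤ S ∧ (select S π).2 < 2^(select S π).1 ∧
      1/3 ≤ mass S π (select S π).1 (select S π).2 ∧
      (mass S π (select S π).1 (select S π).2 ≤ 2/3 ∨ (select S π).1 = S) := by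
  have hroot : mass S π 0 0 = 1 := mass_root.trans hsum
  obtain ⟨a, b, c, d⟩ := descend_spec hpos S 0 0 (by simp) (by rw [hroot]; norm_num) (by simp)
    (select S π) rfl
  refine ⟨?_, a, b, c, d⟩
  by_contra h
  have h0 : (select S π).1 = 0 := by omega
  rw [h0] at b
  have h0' : (select S π).2 = 0 := by simpa using b
  rw [h0, h0', hroot] at d
  rcases d with d | d
  · norm_num at d
  · omega

/-! ### The nested divergence in terms of binary divergences -/

/-- Mass of the intersection of the nodes `(l, q)` and `(lD, kD)`. -/
def interMass (S : ℕ) (π : Fin (2^S) → ℝ) (lD kD l q : ℕ) : ℝ :=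
  ∑ i ∈ node S l q, if i ∈ node S lD kD then π i else 0

/-- Averaging the likelihoods over a set of leaves `A` of mass `w` gives the output of the
binary symmetric channel for the conditional probability `c / w` of the probed node. -/
lemma avg_like {S : ℕ} (π : Fin (2^S) → ℝ) (p : ℕ → ℝ) (lD kD : ℕ) (A : Finset (Fin (2^S)))
    {w c : ℝ} (hw : ∑ i ∈ A, π i = w) (hw0 : w ≠ 0)
    (hc : ∑ i ∈ A, (if i ∈ node S lD kD then π i else 0) = c) :
    (fun z => (∑ i ∈ A, π i * like S p lD kD i z) / w) = bern (out (p lD) (c / w)) := by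
  funext z
  have h : ∑ i ∈ A, π i * like S p lD kD i z =
      c * bern (1 - p lD) z + (w - c) * bern (p lD) z := by
    rw [← hw, ← hc, sub_mul, sum_mul, sum_mul, sum_mul, ← sum_sub_distrib, ← sum_add_distrib]
    refine sum_congr rfl fun i _ => ?_
    unfold like
    split_ifs <;> ring
  rw [h]
  cases z <;> simp only [bern, out, if_true, Bool.false_eq_true, if_false] <;> field_simp <;> ring

lemma sum_ite_node {S lD kD : ℕ} (π : Fin (2^S) → ℝ) :
    ∑ i, (if i ∈ node S lD kD then π i else 0) = mass S π lD kD := by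
  rw [← sum_filter]; simp [mass]

lemma nestedEJS_eq {S : ℕ} (p : ℕ → ℝ) {π : Fin (2^S) → ℝ} (hpos : ∀ i, 0 < π i)
    (hsum : ∑ i, π i = 1) {l : ℕ} (hl1 : 1 ≤ l) (hl : l ≤ S) {lD kD : ℕ}
    (hD : select S π = (lD, kD)) :
    nestedEJS S p l π = ∑ q ∈ range (2^l), mass S π l q *
      kl (out (p lD) (interMass S π lD kD l q / mass S π l q))
        (out (p lD) ((mass S π lD kD - interMass S π lD kD l q) / (1 - mass S π l q))) := by
  unfold nestedEJS
  refine sum_congr rfl fun q hq => ?_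
  have h0 := mass_pos hpos hl (mem_range.1 hq)
  have h1 := mass_lt_one (k := q) hpos hsum hl1 hl
  rw [hD]
  dsimp only
  rw [avg_like π p lD kD (node S l q) (w := mass S π l q) rfl h0.ne' rfl,
    avg_like π p lD kD (node S l q)ᶜ (w := 1 - mass S π l q) _ (by linarith) rfl, KLb_bern,
    sum_compl_node, sum_ite_node]
  · rfl
  · rw [sum_compl_node π, hsum]; rfl

lemma interMass_bounds {S : ℕ} {π : Fin (2^S) → ℝ} (hpos : ∀ i, 0 < π i)
    (hsum : ∑ i, π i = 1) (lD kD l q : ℕ) :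
    0 ≤ interMass S π lD kD l q ∧ interMass S π lD kD l q ≤ mass S π l q ∧
      interMass S π lD kD l q ≤ mass S π lD kD ∧
      mass S π lD kD - interMass S π lD kD l q ≤ 1 - mass S π l q := by
  have hn : ∀ i : Fin (2^S), 0 ≤ if i ∈ node S lD kD then π i else 0 := by
    intro i; split_ifs
    exacts [(hpos i).le, le_rfl]
  have hle : ∀ i : Fin (2^S), (if i ∈ node S lD kD then π i else 0) ≤ π i := by
    intro i; split_ifs
    exacts [le_rfl, (hpos i).le]
  have hc := sum_compl_node (l := l) (k := q)
    (fun i => if i ∈ node S lD kD then π i else 0)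
  rw [sum_ite_node] at hc
  refine ⟨sum_nonneg fun i _ => hn i, sum_le_sum fun i _ => hle i, ?_, ?_⟩
  · have := sum_nonneg fun i (_ : i ∈ (node S l q)ᶜ) => hn i
    rw [hc] at this
    unfold interMass; linarith
  · have := sum_le_sum fun i (_ : i ∈ (node S l q)ᶜ) => hle i
    rw [hc, sum_compl_node π, hsum] at this
    exact this

/-- For every level `1 ≤ l < S`, the level-`l` nested EJS divergence under hiePM
selection is at least
`K₀ = min{ I(1/3;p[1]), (2/3)·D((1/3)Bern(1−p[1]) + (2/3)Bern(p[1]) ‖ Bern(p[1])) }`. -/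
theorem nestedEJS_lower_bound (S : ℕ) (hS : 1 ≤ S) (p : ℕ → ℝ)
    (hp1 : p 1 < 1/2) (hdec : ∀ l, 1 ≤ l → l < S → p (l+1) < p l) (hpS : 0 < p S)
    (π : Fin (2^S) → ℝ) (hpos : ∀ i, 0 < π i) (hlt1 : ∀ i, π i < 1)
    (hsum : ∑ i, π i = 1)
    (l : ℕ) (hl1 : 1 ≤ l) (hl : l < S) :
    K0 (p 1) ≤ nestedEJS S p l π := by
  obtain ⟨hD1, hDS, hDk, hD3, hD23⟩ := select_spec hS hpos hsum
  obtain ⟨lD, kD, hD⟩ : ∃ lD kD, select S π = (lD, kD) := ⟨_, _, rfl⟩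
  rw [hD] at hD1 hDS hDk hD3 hD23
  simp only at hD1 hDS hDk hD3 hD23
  have hanti : ∀ a, 1 ≤ a → ∀ b, a ≤ b → b ≤ S → p b ≤ p a := by
    intro a ha b hab
    induction b, hab using Nat.le_induction with
    | base => exact fun _ => le_rfl
    | succ b hab ih => exact fun hb => (hdec b (by omega) (by omega)).le.trans (ih (by omega))
  have hp0 : 0 < p lD := hpS.trans_le (hanti lD hD1 S hDS le_rfl)
  have hpp1 : p lD ≤ p 1 := hanti 1 le_rfl lD hD1 hDS
  have hp2 : p lD < 1/2 := hpp1.trans_lt hp1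
  rw [nestedEJS_eq p hpos hsum hl1 hl.le hD]
  have hM0 : ∀ q ∈ range (2^l), 0 < mass S π l q :=
    fun q hq => mass_pos hpos hl.le (mem_range.1 hq)
  have hM1 : ∀ q, mass S π l q < 1 := fun q => mass_lt_one hpos hsum hl1 hl.le
  have hin : ∀ q ∈ range (2^l), 0 < out (p lD) (interMass S π lD kD l q / mass S π l q) ∧
      out (p lD) (interMass S π lD kD l q / mass S π l q) < 1 := by
    intro q hq
    obtain ⟨c0, c1, c2, c3⟩ := interMass_bounds hpos hsum lD kD l q
    exact out_bounds hp0 hp2 (div_nonneg c0 (hM0 q hq).le) ((div_le_one (hM0 q hq)).2 c1)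
  have hout : ∀ q,
      0 < out (p lD) ((mass S π lD kD - interMass S π lD kD l q) / (1 - mass S π l q)) ∧
      out (p lD) ((mass S π lD kD - interMass S π lD kD l q) / (1 - mass S π l q)) < 1 := by
    intro q
    obtain ⟨c0, c1, c2, c3⟩ := interMass_bounds hpos hsum lD kD l q
    have := sub_pos.2 (hM1 q)
    exact out_bounds hp0 hp2 (div_nonneg (by linarith) this.le) ((div_le_one this).2 c3)
  rcases le_or_gt lD l with hle | hlt
  · -- Each bin lies inside the selected node or is disjoint from it.
    have hm23 : mass S π lD kD ≤ 2/3 := hD23.resolve_right (by omega)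
    set m := mass S π lD kD with hm
    have hMI : MI m (p lD) = ∑ q ∈ range (2^l),
        (interMass S π lD kD l q * kl (1 - p lD) (out (p lD) m) +
          (mass S π l q - interMass S π lD kD l q) * kl (p lD) (out (p lD) m)) := by
      rw [sum_add_distrib, ← sum_mul, ← sum_mul, sum_sub_distrib]
      have h1 : ∑ q ∈ range (2^l), interMass S π lD kD l q = m := by
        unfold interMass; rw [sum_nodes hl.le, sum_ite_node]
      have h2 : ∑ q ∈ range (2^l), mass S π l q = 1 := by
        unfold mass; rw [sum_nodes hl.le, hsum]
      rw [h1, h2, MI_eq hp0 hp2 (by linarith) (by linarith)]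
    refine (min_le_left _ _).trans ((MI_anti hp0 hpp1 hp1 (by norm_num) (by norm_num)).trans
      ((MI_third_le hp0 hp2 hD3 hm23).trans ?_))
    rw [hMI]
    refine sum_le_sum fun q hq => ?_
    have hM := hM0 q hq
    have hM' := sub_pos.2 (hM1 q)
    have hmix := kl_mix_right (hin q hq).1 (hin q hq).2 (hout q).1 (hout q).2 hM.le (hM1 q).le
    -- the overall output law is the mixture of the laws given the bin and given its complement
    have e : mass S π l q * out (p lD) (interMass S π lD kD l q / mass S π l q) +
        (1 - mass S π l q) *
          out (p lD) ((m - interMass S π lD kD l q) / (1 - mass S π l q)) = out (p lD) m := by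
      unfold out; field_simp; ring
    rw [e] at hmix
    refine le_trans (le_of_eq ?_) (mul_le_mul_of_nonneg_left hmix hM.le)
    by_cases hqD : q / 2^(l - lD) = kD
    · have hc : interMass S π lD kD l q = mass S π l q :=
        sum_congr rfl fun i hi => if_pos ((mem_node_of_mem hle hl.le hi).2 hqD)
      rw [hc, div_self hM.ne', out_one]; ring
    · have hc : interMass S π lD kD l q = 0 :=
        sum_eq_zero fun i hi => if_neg fun h => hqD ((mem_node_of_mem hle hl.le hi).1 h)
      rw [hc, zero_div, out_zero]; ring
  · -- The selected node lies inside the bin `B`, whose term alone suffices.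
    set B := kD / 2^(lD - l) with hB
    have hsub : node S lD kD ⊆ node S l B :=
      fun i hi => (mem_node_of_mem hlt.le hDS hi).2 hB.symm
    have hBmem : B ∈ range (2^l) := by
      rw [mem_range, hB, Nat.div_lt_iff_lt_mul (by positivity), ← pow_add,
        show l + (lD - l) = lD by omega]
      exact hDk
    have hc : interMass S π lD kD l B = mass S π lD kD := by
      unfold interMass mass
      rw [← sum_filter, filter_mem_eq_inter, inter_eq_right.2 hsub]
    have hmM : mass S π lD kD ≤ mass S π l B := hc ▸ (interMass_bounds hpos hsum lD kD l B).2.1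
    refine le_trans ?_ (single_le_sum (fun q hq => mul_nonneg (hM0 q hq).le
      (kl_nonneg (hin q hq).1 (hin q hq).2 (hout q).1 (hout q).2)) hBmem)
    rw [hc, sub_self, zero_div, out_zero]
    exact (K0_le_kl hp0 hpp1 hp1).trans (kl_third_le hp0 hp2 hD3 hmM (hM1 B).le)

end
end

section
/- For any probability vector π on the leaves of a complete binary tree of depth S, the node D selected by the hiePM rule satisfies: either 1/3 ≤ π_D ≤ 2/3, or D is a leaf with π_D > 1/2. In particular, if the selected node has π_D > 2/3, then it is a leaf. -/
/-!
The masses of the two children of a node add up to the mass of the node, so the larger child of a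
node of mass `p` has mass `c ≥ p / 2` (`mass_children`). Suppose the descent stops at a node of mass
`p > 1/2` whose larger child has mass `c ≤ 1/2`. If the child is selected, then
`1/2 - c ≤ p - 1/2`, i.e. `p ≥ 1 - c`, and `c ≥ p / 2` gives `c ≥ 1/3`. If the parent is selected,
then `p < 1 - c ≤ 1 - p / 2`, i.e. `p < 2/3`. The only other way to stop is at a leaf of mass `> 1/2`.
The invariant `mass > 1/2` holds at the root, whose mass is `1`, and is carried along the descent by
induction on the remaining depth (`descend_spec`).
-/

noncomputable section

lemma mass_children (S : ℕ) (π : Fin (2^S) → ℝ) (l k : ℕ) (hl : l < S) :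
    mass S π l k = mass S π (l+1) (2*k) + mass S π (l+1) (2*k+1) := by
  have hpow : 2^(S - l) = 2 * 2^(S - (l+1)) := by
    rw [← pow_succ']
    congr 1
    omega
  have hpos : 0 < 2^(S - (l+1)) := by positivity
  unfold mass
  rw [← Finset.sum_union]
  · congr 1
    ext i
    simp only [node, hpow, Finset.mem_union, Finset.mem_filter, Finset.mem_univ, true_and]
    generalize 2^(S - (l+1)) = m at *
    have e1 : k * (2 * m) = 2 * k * m := by ring
    have e2 : (k + 1) * (2 * m) = 2 * k * m + m + m := by ring
    have e3 : (2 * k + 1) * m = 2 * k * m + m := by ring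
    have e4 : (2 * k + 1 + 1) * m = 2 * k * m + m + m := by ring
    rw [e1, e2, e3, e4]
    omega
  · rw [Finset.disjoint_left]
    intro i h1 h2
    simp only [node, Finset.mem_filter, Finset.mem_univ, true_and] at h1 h2
    omega

/-- From a node of mass `> 1/2` at level `l`, the descent with fuel exactly `S - l` ends as claimed:
that much fuel runs out only at a leaf. -/
lemma descend_spec_s14 (S : ℕ) (π : Fin (2^S) → ℝ) (n l k : ℕ) (hn : n + l = S)
    (hk : 1/2 < mass S π l k) :
    (1/3 ≤ mass S π (descend S π n l k).1 (descend S π n l k).2 ∧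
        mass S π (descend S π n l k).1 (descend S π n l k).2 ≤ 2/3) ∨
      ((descend S π n l k).1 = S ∧
        1/2 < mass S π (descend S π n l k).1 (descend S π n l k).2) := by
  induction n generalizing l k with
  | zero => exact Or.inr ⟨by simpa [descend] using hn, hk⟩
  | succ n ih =>
    have hsplit := mass_children S π l k (by omega)
    rw [descend, if_neg (by omega : l ≠ S)]
    extract_lets k'
    have hc : mass S π l k / 2 ≤ mass S π (l+1) k' := by
      simp only [k']
      split_ifs <;> linarith
    clear_value k'
    split_ifs with h1 h2
    · exact ih (l+1) k' (by omega) h1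
    · left
      rw [abs_of_nonpos (by linarith), abs_of_pos (by linarith)] at h2
      exact ⟨by linarith, by linarith⟩
    · left
      rw [abs_of_nonpos (by linarith), abs_of_pos (by linarith)] at h2
      exact ⟨by linarith, by linarith⟩

/-- The node `D` selected by the hiePM rule satisfies: either `1/3 ≤ π_D ≤ 2/3`,
or `D` is a leaf (level `S`) with `π_D > 1/2`.  In particular, if the selected node
has `π_D > 2/3` then it is a leaf. -/
theorem hiePM_select_mass (S : ℕ) (hS : 1 ≤ S) (π : Fin (2^S) → ℝ)
    (hnn : ∀ i, 0 ≤ π i) (hsum : ∑ i, π i = 1) :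
    ((1/3 ≤ mass S π (select S π).1 (select S π).2 ∧
        mass S π (select S π).1 (select S π).2 ≤ 2/3) ∨
      ((select S π).1 = S ∧ 1/2 < mass S π (select S π).1 (select S π).2)) ∧
    (2/3 < mass S π (select S π).1 (select S π).2 → (select S π).1 = S) := by
  have hroot : mass S π 0 0 = 1 := by simp [mass, node, hsum]
  have h := descend_spec_s14 S π S 0 0 rfl (by rw [hroot]; norm_num)
  refine ⟨h, fun hlt => ?_⟩
  rcases h with h | h
  · exact absurd h.2 (not_le.mpr hlt)
  · exact h.1

end
end

section
/- Let π be a probability vector on the leaves of a complete binary tree of depth S and let l < S. If some node at level l has posterior mass π_{D_l^k} > 2/3, then the node selected by the hiePM rule lies at level at least l + 1. -/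
/-!
The ancestors of a node of mass `> 2/3` all have mass `> 2/3`, and since the total mass is `1`,
the sibling of such an ancestor has mass `< 1/3`. Hence the descent, which always goes to the
heavier child, follows the ancestors down to the heavy node `(l, k)` itself. One of the children of
`(l, k)` has mass at least half that of `(l, k)`, so the heavier child has mass `> 1/3`. Either it
has mass `> 1/2` and the descent goes on below level `l`, or its mass lies in `(1/3, 1/2]`, at
distance less than `1/6` from `1/2`, whereas the mass of `(l, k)` is more than `1/6` away: the child
is selected.
-/

noncomputable section

/-- The two children of a node above leaf level partition its leaves. -/
lemma mass_eq_add_children (S : ℕ) (π : Fin (2^S) → ℝ) {l : ℕ} (hl : l < S) (k : ℕ) :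
    mass S π l k = mass S π (l+1) (2*k) + mass S π (l+1) (2*k+1) := by
  obtain ⟨d, rfl⟩ : ∃ d, S = l + 1 + d := ⟨S - (l+1), by omega⟩
  have e1 : l + 1 + d - l = d + 1 := by omega
  have e2 : l + 1 + d - (l + 1) = d := by omega
  unfold mass
  rw [← Finset.sum_union]
  · congr 1
    ext i
    simp only [node, Finset.mem_filter, Finset.mem_univ, true_and, Finset.mem_union, e1, e2]
    have h1 : k * 2^(d+1) = 2 * k * 2^d := by ring
    have h2 : (k+1) * 2^(d+1) = 2 * k * 2^d + 2^d + 2^d := by ring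
    have h3 : (2*k+1) * 2^d = 2 * k * 2^d + 2^d := by ring
    have h4 : (2*k+1+1) * 2^d = 2 * k * 2^d + 2^d + 2^d := by ring
    rw [h1, h2, h3, h4]
    omega
  · rw [Finset.disjoint_left]
    intro i hi hj
    simp only [node, Finset.mem_filter, Finset.mem_univ, true_and] at hi hj
    omega

lemma mass_nonneg (S : ℕ) (π : Fin (2^S) → ℝ) (hnn : ∀ i, 0 ≤ π i) (l k : ℕ) :
    0 ≤ mass S π l k := Finset.sum_nonneg fun i _ => hnn i

lemma mass_le_one (S : ℕ) (π : Fin (2^S) → ℝ) (hnn : ∀ i, 0 ≤ π i) (hsum : ∑ i, π i = 1)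
    (l k : ℕ) : mass S π l k ≤ 1 :=
  hsum ▸ Finset.sum_le_sum_of_subset_of_nonneg (Finset.subset_univ _) fun i _ _ => hnn i

lemma mass_le_parent (S : ℕ) (π : Fin (2^S) → ℝ) (hnn : ∀ i, 0 ≤ π i) {l : ℕ} (hl : l < S)
    (k : ℕ) : mass S π (l+1) k ≤ mass S π l (k/2) := by
  have h := mass_eq_add_children S π hl (k/2)
  have h0 := mass_nonneg S π hnn (l+1) (2*(k/2))
  have h1 := mass_nonneg S π hnn (l+1) (2*(k/2)+1)
  obtain hk | hk : k = 2*(k/2) ∨ k = 2*(k/2)+1 := by omega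
  · rw [← hk] at h h1
    linarith
  · rw [← hk] at h
    linarith

/-- The ancestor of `(m + d, k)` at level `m` has index `k / 2^d`, and at least the same mass. -/
lemma mass_le_ancestor (S : ℕ) (π : Fin (2^S) → ℝ) (hnn : ∀ i, 0 ≤ π i) (m d k : ℕ)
    (hd : m + d ≤ S) : mass S π (m+d) k ≤ mass S π m (k/2^d) := by
  induction d generalizing k with
  | zero => simp
  | succ d ih =>
    have h1 := mass_le_parent S π hnn (l := m+d) (by omega) k
    have h2 := ih (k/2) (by omega)
    rw [Nat.div_div_eq_div_mul, ← pow_succ'] at h2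
    exact h1.trans h2

lemma le_descend_level (S : ℕ) (π : Fin (2^S) → ℝ) (fuel l k : ℕ) :
    l ≤ (descend S π fuel l k).1 := by
  induction fuel generalizing l k with
  | zero => simp [descend]
  | succ n ih =>
    unfold descend
    dsimp only
    generalize (if mass S π (l+1) (2*k+1) ≤ mass S π (l+1) (2*k) then 2*k else 2*k+1) = k'
    split_ifs
    · exact le_rfl
    · exact (Nat.le_succ l).trans (ih _ _)
    · exact Nat.le_succ l
    · exact le_rfl

/-- Starting at a node above leaf level of mass `> 2/3`, with fuel left, the descent moves strictly
below it: the heavier child has mass `> 1/3`, hence is closer to `1/2` than its parent if it has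
mass `≤ 1/2`. -/
lemma lt_descend_level (S : ℕ) (π : Fin (2^S) → ℝ) (fuel : ℕ) {l k : ℕ} (hl : l < S)
    (hmass : 2/3 < mass S π l k) : l + 1 ≤ (descend S π (fuel+1) l k).1 := by
  have hsplit := mass_eq_add_children S π hl k
  unfold descend
  dsimp only
  rw [if_neg hl.ne]
  have hk' : 1/3 < mass S π (l+1)
      (if mass S π (l+1) (2*k+1) ≤ mass S π (l+1) (2*k) then 2*k else 2*k+1) := by
    split_ifs <;> linarith
  generalize (if mass S π (l+1) (2*k+1) ≤ mass S π (l+1) (2*k) then 2*k else 2*k+1) = k' at *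
  split_ifs with h1 h2
  · exact le_descend_level S π _ _ _
  · exact le_rfl
  · refine absurd ?_ h2
    rw [abs_of_nonpos (by linarith), abs_of_nonneg (by linarith)]
    linarith

/-- Starting at the ancestor `(m, k / 2^d)` of a node `(m + d, k)` of mass `> 2/3`, the descent
passes through `(m + d, k)` and then moves strictly below it. -/
lemma lt_descend_level_of_ancestor (S : ℕ) (π : Fin (2^S) → ℝ) (hnn : ∀ i, 0 ≤ π i)
    (hsum : ∑ i, π i = 1) (m d k fuel : ℕ) (hl : m + d < S) (hfuel : d < fuel)
    (hmass : 2/3 < mass S π (m+d) k) :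
    m + d + 1 ≤ (descend S π fuel m (k/2^d)).1 := by
  induction d generalizing m fuel with
  | zero =>
    obtain ⟨n, rfl⟩ : ∃ n, fuel = n + 1 := ⟨fuel - 1, by omega⟩
    simpa using lt_descend_level S π n hl (by simpa using hmass)
  | succ d ih =>
    obtain ⟨n, rfl⟩ : ∃ n, fuel = n + 1 := ⟨fuel - 1, by omega⟩
    have he : m + (d+1) = m + 1 + d := by omega
    rw [he] at hmass hl ⊢
    have hanc := mass_le_ancestor S π hnn (m+1) d k hl.le
    have hrec := ih (m+1) n hl (by omega) hmass
    have hdiv : k / 2^(d+1) = k / 2^d / 2 := by rw [pow_succ, Nat.div_div_eq_div_mul]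
    rw [hdiv]
    generalize k / 2^d = c at *
    have hsplit := mass_eq_add_children S π (show m < S by omega) (c/2)
    have hle := mass_le_one S π hnn hsum m (c/2)
    -- The child `c` on the path has mass `> 2/3`, its sibling `< 1/3`, so the heavier one is `c`.
    have hc : (if mass S π (m+1) (2*(c/2)+1) ≤ mass S π (m+1) (2*(c/2))
        then 2*(c/2) else 2*(c/2)+1) = c := by
      obtain h | h : 2*(c/2) = c ∨ 2*(c/2)+1 = c := by omega
      · rw [h] at hsplit ⊢
        exact if_pos (by linarith)
      · rw [h] at hsplit ⊢
        exact if_neg (by linarith)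
    unfold descend
    dsimp only
    rw [hc, if_neg (by omega), if_pos (by linarith)]
    exact hrec

/-- If some node at level `l < S` has posterior mass `> 2/3`, then the node selected
by the hiePM rule lies at level at least `l + 1`. -/
theorem hiePM_select_level_gt (S : ℕ) (hS : 1 ≤ S) (π : Fin (2^S) → ℝ)
    (hnn : ∀ i, 0 ≤ π i) (hsum : ∑ i, π i = 1)
    (l : ℕ) (hl : l < S) (k : ℕ) (hk : k < 2^l) (hmass : 2/3 < mass S π l k) :
    l + 1 ≤ (select S π).1 := by
  have h := lt_descend_level_of_ancestor S π hnn hsum 0 l k S (by omega) hl (by simpa using hmass)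
  -- The level-`0` ancestor of `(l, k)` is the root, as `k < 2^l`.
  rw [Nat.div_eq_of_lt hk] at h
  simpa [select] using h

end
end
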